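/- Let t > 10 be an integer and let G be the join of the complete graph K_5 and the empty graph on t vertices (i.e., G has vertex set the disjoint union of a 5-set A and a t-set B, with two vertices adjacent if and only if at least one of them lies in A). Then MMO(G) = 5 and S_max*(G) = 5, where MMO(G) is the minimum over all orientations of G of the maximum outdegree of a vertex and S_max*(G) is the minimum over all edge-decompositions of G into stars of the maximum storage of a vertex. -/

import Mathlib

open Classical

noncomputable section

variable {V : Type*}

/-- An edge-decomposition of `G` into stars: a finite collection of stars, each given by
a designated centre together with a nonempty set of edges of `G` all incident with the
centre, such that the edge sets are pairwise disjoint and cover the edge set of `G`. -/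
structure StarDecomposition (G : SimpleGraph V) where
  stars : Finset (V × Finset (Sym2 V))
  star_nonempty : ∀ p ∈ stars, p.2.Nonempty
  centre_mem : ∀ p ∈ stars, ∀ e ∈ p.2, p.1 ∈ e
  edges_sub : ∀ p ∈ stars, ∀ e ∈ p.2, e ∈ G.edgeSet
  disj : ∀ p ∈ stars, ∀ q ∈ stars, p ≠ q → Disjoint p.2 q.2
  covers : ∀ e ∈ G.edgeSet, ∃ p ∈ stars, e ∈ p.2

namespace StarDecomposition

variable {G : SimpleGraph V}

/-- The storage of a vertex `u`: the number of stars of the decomposition that contain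
`u` as a vertex (as centre or leaf). -/
def storage (D : StarDecomposition G) (u : V) : ℕ :=
  (D.stars.filter fun p => ∃ e ∈ p.2, u ∈ e).card

/-- The number of stars of the decomposition in which `u` is a leaf
(a vertex other than the centre). -/
def leafCount (D : StarDecomposition G) (u : V) : ℕ :=
  (D.stars.filter fun p => u ≠ p.1 ∧ ∃ e ∈ p.2, u ∈ e).card

/-- The total storage of a decomposition: the sum of the storages of all vertices. -/
def totalStorage [Fintype V] (D : StarDecomposition G) : ℕ :=
  ∑ u, D.storage u

end StarDecomposition

/-- `S*(G)`: the minimum total storage over all edge-decompositions of `G` into stars. -/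
def SStar [Fintype V] (G : SimpleGraph V) : ℕ :=
  sInf {S | ∃ D : StarDecomposition G, D.totalStorage = S}

/-- `S_max*(G)`: the minimum, over all edge-decompositions of `G` into stars, of the
maximum storage of a vertex. -/
def SmaxStar (G : SimpleGraph V) : ℕ :=
  sInf {k | ∃ D : StarDecomposition G, ∀ v, D.storage v ≤ k}

/-- The minimum number of stars over all edge-decompositions of `G` into stars. -/
def minStars (G : SimpleGraph V) : ℕ :=
  sInf {k | ∃ D : StarDecomposition G, D.stars.card = k}

/-- An orientation of `G`: each edge is assigned a head (one of its two endpoints);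
the other endpoint is its tail. -/
structure EdgeOrientation (G : SimpleGraph V) where
  head : Sym2 V → V
  head_mem : ∀ e ∈ G.edgeSet, head e ∈ e

namespace EdgeOrientation

variable {G : SimpleGraph V}

/-- The indegree of `v`: the number of edges whose head is `v`. -/
def indeg (o : EdgeOrientation G) (v : V) : ℕ :=
  {e | e ∈ G.edgeSet ∧ o.head e = v}.ncard

/-- The outdegree of `v`: the number of edges incident with `v` whose head is not `v`. -/
def outdeg (o : EdgeOrientation G) (v : V) : ℕ :=
  {e | e ∈ G.edgeSet ∧ v ∈ e ∧ o.head e ≠ v}.ncard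

end EdgeOrientation

/-- `MMI(G)`: the minimum over all orientations of `G` of the maximum indegree. -/
def MMI (G : SimpleGraph V) : ℕ :=
  sInf {k | ∃ o : EdgeOrientation G, ∀ v, o.indeg v ≤ k}

/-- `MMO(G)`: the minimum over all orientations of `G` of the maximum outdegree. -/
def MMO (G : SimpleGraph V) : ℕ :=
  sInf {k | ∃ o : EdgeOrientation G, ∀ v, o.outdeg v ≤ k}

/-- The independence number `α(G)`: the maximum size of a set of vertices no two of
which are adjacent. -/
def indepNum (G : SimpleGraph V) : ℕ :=
  sSup {k | ∃ s : Finset V, (∀ u ∈ s, ∀ v ∈ s, ¬ G.Adj u v) ∧ s.card = k}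

end

/-!
Directing every edge of a star towards its centre makes each vertex `v` the tail of exactly one edge
for every star in which `v` is a leaf, so `MMO G ≤ SmaxStar G`. Conversely, directing every edge
towards a vertex of a vertex cover `C` and grouping the edges by their heads gives at most `#C`
stars, so `SmaxStar G ≤ #C`. Since each edge has exactly one tail, `G` has at most
`|V| * MMO G` edges. The join of `K_a` with `b` isolated vertices has a vertex cover of size `a`
and more than `(a + b) * (a - 1)` edges as soon as `b > a.choose 2`, which forces equality in
`MMO G ≤ SmaxStar G ≤ a`.
-/

namespace EdgeOrientation

variable {V : Type*} {G : SimpleGraph V}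

theorem existsUnique_tail (o : EdgeOrientation G) {e : Sym2 V} (he : e ∈ G.edgeSet) :
    ∃! v, v ∈ e ∧ o.head e ≠ v := by
  have hhead := o.head_mem e he
  refine ⟨Sym2.Mem.other hhead, ⟨Sym2.other_mem hhead,
    (Sym2.other_ne (G.not_isDiag_of_mem_edgeSet he) hhead).symm⟩, ?_⟩
  rintro v ⟨hv, hne⟩
  have he_eq : e = s(o.head e, v) := (Sym2.mem_and_mem_iff hne).1 ⟨hhead, hv⟩
  exact Sym2.congr_right.1 (he_eq.symm.trans (Sym2.other_spec hhead).symm)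

theorem sum_outdeg [Fintype V] (o : EdgeOrientation G) :
    ∑ v, o.outdeg v = G.edgeSet.ncard := by
  let outEdges (v : V) : Set (Sym2 V) := {e | e ∈ G.edgeSet ∧ v ∈ e ∧ o.head e ≠ v}
  have disjoint_outEdges : Pairwise (Function.onFun Disjoint outEdges) := fun _ _ huv ↦
    Set.disjoint_left.2 fun _ hu hv ↦ huv ((o.existsUnique_tail hu.1).unique hu.2 hv.2)
  have iUnion_outEdges : ⋃ v, outEdges v = G.edgeSet := by
    refine (Set.iUnion_subset fun _ _ he ↦ he.1).antisymm fun e he ↦ ?_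
    obtain ⟨v, hv⟩ := (o.existsUnique_tail he).exists
    exact Set.mem_iUnion.2 ⟨v, he, hv⟩
  rw [← iUnion_outEdges, Set.ncard_iUnion_of_finite (fun _ ↦ Set.toFinite _) disjoint_outEdges,
    finsum_eq_sum_of_fintype]
  rfl

theorem exists_head_mem_of_isVertexCover {C : Set V} (hC : G.IsVertexCover C) :
    ∃ o : EdgeOrientation G, ∀ e ∈ G.edgeSet, o.head e ∈ C := by
  have exists_endpoint (e : Sym2 V) : ∃ v ∈ e, e ∈ G.edgeSet → v ∈ C := by
    by_cases he : e ∈ G.edgeSet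
    · induction e with
      | _ u v =>
        rcases hC he with hu | hv
        · exact ⟨u, Sym2.mem_mk_left u v, fun _ ↦ hu⟩
        · exact ⟨v, Sym2.mem_mk_right u v, fun _ ↦ hv⟩
    · exact ⟨e.out.1, e.out_fst_mem, fun h ↦ absurd h he⟩
  choose head head_mem head_mem_cover using exists_endpoint
  exact ⟨⟨head, fun e _ ↦ head_mem e⟩, head_mem_cover⟩

/-- The in-star of `v`, encoded as in `StarDecomposition.stars`: the centre `v` together with all
edges whose head is `v`. -/
noncomputable def inStar [Fintype G.edgeSet] (o : EdgeOrientation G) (v : V) :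
    V × Finset (Sym2 V) :=
  (v, {e ∈ G.edgeFinset | o.head e = v})

theorem mem_inStar_snd [Fintype G.edgeSet] {o : EdgeOrientation G} {v : V} {e : Sym2 V} :
    e ∈ (o.inStar v).2 ↔ e ∈ G.edgeSet ∧ o.head e = v := by
  simp [inStar]

/-- The decomposition into the in-stars of an orientation. Only vertices that are heads of edges
occur as centres, because stars must be nonempty. -/
noncomputable def toStarDecomposition [Fintype G.edgeSet] (o : EdgeOrientation G) :
    StarDecomposition G where
  stars := (G.edgeFinset.image o.head).image o.inStar
  star_nonempty := by
    simp only [Finset.forall_mem_image, SimpleGraph.mem_edgeFinset]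
    exact fun e he ↦ ⟨e, mem_inStar_snd.2 ⟨he, rfl⟩⟩
  centre_mem := by
    simp only [Finset.forall_mem_image, mem_inStar_snd]
    rintro _ - e ⟨he, hhead⟩
    exact hhead ▸ o.head_mem e he
  edges_sub := by
    simp only [Finset.forall_mem_image, mem_inStar_snd]
    exact fun _ _ _ he ↦ he.1
  disj := by
    simp only [Finset.forall_mem_image, Finset.disjoint_left, mem_inStar_snd]
    rintro _ - _ - hne e ⟨-, hhead⟩ ⟨-, hhead'⟩
    exact hne (congrArg o.inStar (hhead.symm.trans hhead'))
  covers e he := by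
    refine ⟨o.inStar (o.head e), ?_, mem_inStar_snd.2 ⟨he, rfl⟩⟩
    exact Finset.mem_image_of_mem _ (Finset.mem_image_of_mem _ (G.mem_edgeFinset.2 he))

theorem card_stars_toStarDecomposition [Fintype G.edgeSet] (o : EdgeOrientation G) :
    o.toStarDecomposition.stars.card = (G.edgeFinset.image o.head).card :=
  Finset.card_image_of_injective _ fun _ _ h ↦ congrArg Prod.fst h

end EdgeOrientation

namespace StarDecomposition

variable {V : Type*} {G : SimpleGraph V}

theorem storage_le_card_stars (D : StarDecomposition G) (v : V) : D.storage v ≤ D.stars.card :=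
  Finset.card_filter_le _ _

theorem leafCount_le_storage (D : StarDecomposition G) (v : V) : D.leafCount v ≤ D.storage v :=
  Finset.card_le_card (Finset.monotone_filter_right _ fun _ _ h ↦ h.2)

/-- The star of `D` containing the edge `e`; if `e` is not an edge of `G`, the value is an empty
set of edges with one of the two elements of `e` as centre. -/
noncomputable def starOf (D : StarDecomposition G) (e : Sym2 V) : V × Finset (Sym2 V) :=
  if he : e ∈ G.edgeSet then (D.covers e he).choose else (e.out.1, ∅)

theorem starOf_mem_stars (D : StarDecomposition G) {e : Sym2 V} (he : e ∈ G.edgeSet) :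
    D.starOf e ∈ D.stars := by
  rw [starOf, dif_pos he]
  exact (D.covers e he).choose_spec.1

theorem mem_starOf (D : StarDecomposition G) {e : Sym2 V} (he : e ∈ G.edgeSet) :
    e ∈ (D.starOf e).2 := by
  rw [starOf, dif_pos he]
  exact (D.covers e he).choose_spec.2

/-- The orientation that directs every edge towards the centre of its star. -/
noncomputable def toEdgeOrientation (D : StarDecomposition G) : EdgeOrientation G where
  head e := (D.starOf e).1
  head_mem e he := D.centre_mem _ (D.starOf_mem_stars he) e (D.mem_starOf he)

theorem outdeg_toEdgeOrientation_le_leafCount (D : StarDecomposition G) (v : V) :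
    D.toEdgeOrientation.outdeg v ≤ D.leafCount v := by
  have eq_of_tail {e : Sym2 V} (he : e ∈ G.edgeSet) (hv : v ∈ e) (hne : (D.starOf e).1 ≠ v) :
      e = s((D.starOf e).1, v) :=
    (Sym2.mem_and_mem_iff hne).1 ⟨D.toEdgeOrientation.head_mem e he, hv⟩
  rw [EdgeOrientation.outdeg, leafCount, ← Set.ncard_coe_finset]
  refine Set.ncard_le_ncard_of_injOn D.starOf ?_ ?_ (Finset.finite_toSet _)
  · rintro e ⟨he, hv, hne⟩
    exact Finset.mem_coe.2 <| Finset.mem_filter.2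
      ⟨D.starOf_mem_stars he, hne.symm, e, D.mem_starOf he, hv⟩
  · rintro e ⟨he, hv, hne⟩ f ⟨hf, hv', hne'⟩ hstar
    rw [eq_of_tail he hv hne, eq_of_tail hf hv' hne', hstar]

theorem outdeg_toEdgeOrientation_le_storage (D : StarDecomposition G) (v : V) :
    D.toEdgeOrientation.outdeg v ≤ D.storage v :=
  (D.outdeg_toEdgeOrientation_le_leafCount v).trans (D.leafCount_le_storage v)

end StarDecomposition

section Bounds

variable {V : Type*} (G : SimpleGraph V)

theorem exists_storage_le_SmaxStar [Finite G.edgeSet] :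
    ∃ D : StarDecomposition G, ∀ v, D.storage v ≤ SmaxStar G := by
  have := Fintype.ofFinite G.edgeSet
  obtain ⟨o, -⟩ := EdgeOrientation.exists_head_mem_of_isVertexCover G.isVertexCover_univ
  exact Nat.sInf_mem (s := {k | ∃ D : StarDecomposition G, ∀ v, D.storage v ≤ k})
    ⟨_, o.toStarDecomposition, o.toStarDecomposition.storage_le_card_stars⟩

theorem exists_outdeg_le_MMO [Finite G.edgeSet] :
    ∃ o : EdgeOrientation G, ∀ v, o.outdeg v ≤ MMO G := by
  obtain ⟨D, hD⟩ := exists_storage_le_SmaxStar G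
  exact Nat.sInf_mem (s := {k | ∃ o : EdgeOrientation G, ∀ v, o.outdeg v ≤ k})
    ⟨_, D.toEdgeOrientation, fun v ↦ (D.outdeg_toEdgeOrientation_le_storage v).trans (hD v)⟩

theorem MMO_le_SmaxStar [Finite G.edgeSet] : MMO G ≤ SmaxStar G := by
  obtain ⟨D, hD⟩ := exists_storage_le_SmaxStar G
  exact Nat.sInf_le
    ⟨D.toEdgeOrientation, fun v ↦ (D.outdeg_toEdgeOrientation_le_storage v).trans (hD v)⟩

theorem ncard_edgeSet_le_card_mul_MMO [Fintype V] :
    G.edgeSet.ncard ≤ Fintype.card V * MMO G := by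
  obtain ⟨o, ho⟩ := exists_outdeg_le_MMO G
  calc G.edgeSet.ncard = ∑ v, o.outdeg v := o.sum_outdeg.symm
    _ ≤ Fintype.card V * MMO G := by
      simpa using Finset.sum_le_card_nsmul Finset.univ o.outdeg (MMO G) fun v _ ↦ ho v

variable {G}

theorem SmaxStar_le_card_of_isVertexCover [Finite G.edgeSet] {C : Finset V}
    (hC : G.IsVertexCover C) : SmaxStar G ≤ C.card := by
  have := Fintype.ofFinite G.edgeSet
  obtain ⟨o, ho⟩ := EdgeOrientation.exists_head_mem_of_isVertexCover hC
  have heads_subset : G.edgeFinset.image o.head ⊆ C :=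
    Finset.image_subset_iff.2 fun e he ↦ ho e (G.mem_edgeFinset.1 he)
  refine Nat.sInf_le ⟨o.toStarDecomposition, fun v ↦ ?_⟩
  calc o.toStarDecomposition.storage v
      ≤ o.toStarDecomposition.stars.card := StarDecomposition.storage_le_card_stars _ v
    _ = (G.edgeFinset.image o.head).card := o.card_stars_toStarDecomposition
    _ ≤ C.card := Finset.card_le_card heads_subset

-- The hypothesis is `|V| * (#C - 1) < |E|`, rearranged to avoid truncated subtraction.
theorem MMO_and_SmaxStar_eq_card_of_isVertexCover [Fintype V] {C : Finset V}
    (hC : G.IsVertexCover C)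
    (hcard : Fintype.card V * C.card < G.edgeSet.ncard + Fintype.card V) :
    MMO G = C.card ∧ SmaxStar G = C.card := by
  have hupper := SmaxStar_le_card_of_isVertexCover hC
  have hmid := MMO_le_SmaxStar G
  have hlower : C.card < MMO G + 1 := by
    refine lt_of_mul_lt_mul_left ?_ (Nat.zero_le (Fintype.card V))
    calc Fintype.card V * C.card < G.edgeSet.ncard + Fintype.card V := hcard
      _ ≤ Fintype.card V * (MMO G + 1) := by
        rw [mul_add_one]
        gcongr
        exact ncard_edgeSet_le_card_mul_MMO G
  omega

end Bounds

theorem choose_two_mul_two (n : ℕ) : n.choose 2 * 2 = n * (n - 1) := by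
  rw [Nat.choose_two_right, Nat.div_mul_cancel (Nat.even_mul_pred_self n).two_dvd]

/-- The complete split graph: the join of the complete graph on `α` and the empty graph on `β`.
`SimpleGraph.fromRel` symmetrises the relation and removes loops. -/
def completeSplitGraph (α β : Type*) : SimpleGraph (α ⊕ β) :=
  SimpleGraph.fromRel fun u _ ↦ u.isLeft = true

namespace completeSplitGraph

variable {α β : Type*}

theorem adj_iff {u v : α ⊕ β} :
    (completeSplitGraph α β).Adj u v ↔ u ≠ v ∧ (u.isLeft = true ∨ v.isLeft = true) :=
  SimpleGraph.fromRel_adj _ u v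

variable (α β) in
theorem isVertexCover_range_inl : (completeSplitGraph α β).IsVertexCover (Set.range Sum.inl) := by
  intro u v h
  simpa only [Set.range_inl, Set.mem_ofPred_eq] using (adj_iff.1 h).2

variable [Fintype α] [Fintype β]

theorem degree_inl (a : α) :
    (completeSplitGraph α β).degree (.inl a) = Fintype.card α - 1 + Fintype.card β := by
  have hneighbors : (completeSplitGraph α β).neighborFinset (.inl a) =
      (Finset.univ.erase a).disjSum Finset.univ := by
    ext (_ | _) <;> simp [adj_iff, eq_comm]
  rw [← SimpleGraph.card_neighborFinset_eq_degree, hneighbors, Finset.card_disjSum,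
    Finset.card_erase_of_mem (Finset.mem_univ a), Finset.card_univ, Finset.card_univ]

theorem degree_inr (b : β) : (completeSplitGraph α β).degree (.inr b) = Fintype.card α := by
  have hneighbors : (completeSplitGraph α β).neighborFinset (.inr b) =
      Finset.univ.disjSum ∅ := by
    ext (_ | _) <;> simp [adj_iff]
  rw [← SimpleGraph.card_neighborFinset_eq_degree, hneighbors, Finset.card_disjSum,
    Finset.card_univ, Finset.card_empty, add_zero]

variable (α β) in
theorem ncard_edgeSet : (completeSplitGraph α β).edgeSet.ncard =
    (Fintype.card α).choose 2 + Fintype.card α * Fintype.card β := by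
  have hdegrees := (completeSplitGraph α β).sum_degrees_eq_twice_card_edges
  simp only [Fintype.sum_sum_type, degree_inl, degree_inr, Finset.sum_const, Finset.card_univ,
    smul_eq_mul, mul_add, ← choose_two_mul_two] at hdegrees
  rw [← SimpleGraph.coe_edgeFinset, Set.ncard_coe_finset]
  linarith

end completeSplitGraph

theorem MMO_and_SmaxStar_join_general (α β : Type*) [Fintype α] [Fintype β]
    (h : (Fintype.card α).choose 2 < Fintype.card β) :
    MMO (completeSplitGraph α β) = Fintype.card α ∧
      SmaxStar (completeSplitGraph α β) = Fintype.card α := by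
  let C : Finset (α ⊕ β) := Finset.univ.map Function.Embedding.inl
  have hC : (completeSplitGraph α β).IsVertexCover C := by
    simpa [C] using completeSplitGraph.isVertexCover_range_inl α β
  have hC_card : C.card = Fintype.card α := Finset.card_map _
  rw [← hC_card]
  refine MMO_and_SmaxStar_eq_card_of_isVertexCover hC ?_
  have hsq : Fintype.card α * Fintype.card α = (Fintype.card α).choose 2 * 2 + Fintype.card α := by
    rw [choose_two_mul_two, Nat.mul_sub_one, Nat.sub_add_cancel (Nat.le_mul_self _)]
  rw [completeSplitGraph.ncard_edgeSet, hC_card, Fintype.card_sum]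
  linarith

/-- For any `t > 10`, the join of `K_5` and the empty graph on `t`
vertices (vertices `u`, `v` adjacent iff `u ≠ v` and at least one of them is in the
`5`-set) satisfies `MMO(G) = 5` and `S_max*(G) = 5`. -/
theorem MMO_and_SmaxStar_join (t : ℕ) (ht : 10 < t) :
    MMO (SimpleGraph.fromRel fun (u _ : Fin 5 ⊕ Fin t) => u.isLeft = true) = 5 ∧
      SmaxStar (SimpleGraph.fromRel fun (u _ : Fin 5 ⊕ Fin t) => u.isLeft = true) = 5 := by
  simpa [completeSplitGraph] using
    MMO_and_SmaxStar_join_general (Fin 5) (Fin t) (by simpa [Nat.choose] using ht)
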